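/- For the SCAD penalty with a > 2, λ > 0, the SCAD thresholding rule θ̂(z) = sgn(z)(|z|-λ)₊ for |z| ≤ 2λ; θ̂(z) = ((a-1)z - sgn(z)aλ)/(a-2) for 2λ < |z| ≤ aλ; θ̂(z) = z for |z| > aλ, is a continuous function of z, equals 0 iff |z| ≤ λ, and satisfies θ̂(z) = z for |z| > aλ. -/

import Mathlib

/-- The SCAD thresholding rule with parameters `a > 2` and `λ > 0`. -/
noncomputable def scadThreshold (a lam z : ℝ) : ℝ :=
  if |z| ≤ 2 * lam then Real.sign z * max (|z| - lam) 0
  else if |z| ≤ a * lam then ((a - 1) * z - Real.sign z * a * lam) / (a - 2)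
  else z

/-- Piecewise linear positive part of the rule. -/
noncomputable def scadPos (a lam z : ℝ) : ℝ :=
  max (z - lam) 0 + (max (z - 2 * lam) 0 - max (z - a * lam) 0) / (a - 2)

lemma scadPos_of_nonpos (a lam z : ℝ) (ha : 2 < a) (hlam : 0 < lam) (hz : z ≤ 0) :
    scadPos a lam z = 0 := by
  have h : 2 * lam < a * lam := by nlinarith
  unfold scadPos
  rw [max_eq_right (by linarith), max_eq_right (by linarith), max_eq_right (by linarith)]
  simp

lemma scadThreshold_of_pos (a lam z : ℝ) (ha : 2 < a) (hlam : 0 < lam) (hz : 0 < z) :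
    scadThreshold a lam z = scadPos a lam z := by
  have h : 2 * lam < a * lam := by nlinarith
  have h2 : a - 2 ≠ 0 := by linarith
  unfold scadPos scadThreshold
  rw [abs_of_pos hz, Real.sign_of_pos hz]
  split_ifs with h3 h4
  · rw [max_eq_right (a := z - 2 * lam) (by linarith),
      max_eq_right (a := z - a * lam) (by linarith)]
    simp
  · rw [max_eq_left (a := z - lam) (by linarith), max_eq_left (a := z - 2 * lam) (by linarith),
      max_eq_right (a := z - a * lam) (by linarith)]
    field_simp
    ring
  · rw [max_eq_left (a := z - lam) (by linarith), max_eq_left (a := z - 2 * lam) (by linarith),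
      max_eq_left (a := z - a * lam) (by linarith)]
    field_simp
    ring

lemma scadThreshold_neg (a lam z : ℝ) :
    scadThreshold a lam (-z) = - scadThreshold a lam z := by
  unfold scadThreshold
  rw [abs_neg, Real.sign_neg]
  split_ifs <;> ring

lemma scadThreshold_eq (a lam : ℝ) (ha : 2 < a) (hlam : 0 < lam) :
    scadThreshold a lam = fun z => scadPos a lam z - scadPos a lam (-z) := by
  funext z
  rcases lt_trichotomy z 0 with hz | hz | hz
  · have h1 := scadThreshold_neg a lam z
    rw [scadThreshold_of_pos a lam (-z) ha hlam (by linarith)] at h1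
    rw [scadPos_of_nonpos a lam z ha hlam hz.le]
    linarith
  · subst hz
    simp [scadThreshold, hlam.le]
  · rw [scadThreshold_of_pos a lam z ha hlam hz,
      scadPos_of_nonpos a lam (-z) ha hlam (by linarith), sub_zero]

lemma scadThreshold_zero_iff_of_pos (a lam z : ℝ) (ha : 2 < a) (hlam : 0 < lam) (hz : 0 < z) :
    scadThreshold a lam z = 0 ↔ |z| ≤ lam := by
  have h : 2 * lam < a * lam := by nlinarith
  rw [abs_of_pos hz]
  constructor
  · intro h0
    rw [scadThreshold_of_pos a lam z ha hlam hz] at h0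
    unfold scadPos at h0
    have h1 : 0 ≤ (max (z - 2 * lam) 0 - max (z - a * lam) 0) / (a - 2) :=
      div_nonneg (sub_nonneg.2 (max_le_max (by linarith) le_rfl)) (by linarith)
    have h2 := le_max_left (z - lam) 0
    linarith
  · intro h1
    unfold scadThreshold
    rw [abs_of_pos hz, if_pos (by linarith), max_eq_right (by linarith), mul_zero]

/-- The SCAD thresholding rule is continuous in `z`, equals `0` iff `|z| ≤ λ`, and
satisfies `θ̂(z) = z` for `|z| > aλ`. -/
theorem scad_threshold_properties (a lam : ℝ) (ha : 2 < a) (hlam : 0 < lam) :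
    Continuous (scadThreshold a lam) ∧
      (∀ z : ℝ, scadThreshold a lam z = 0 ↔ |z| ≤ lam) ∧
      (∀ z : ℝ, a * lam < |z| → scadThreshold a lam z = z) := by
  refine ⟨?_, ?_, ?_⟩
  · rw [scadThreshold_eq a lam ha hlam]
    unfold scadPos
    fun_prop
  · intro z
    rcases lt_trichotomy z 0 with hz | hz | hz
    · have h := scadThreshold_zero_iff_of_pos a lam (-z) ha hlam (by linarith)
      rwa [scadThreshold_neg, neg_eq_zero, abs_neg] at h
    · subst hz
      simp [scadThreshold, hlam.le]
    · exact scadThreshold_zero_iff_of_pos a lam z ha hlam hz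
  · intro z hz
    have h : 2 * lam < a * lam := by nlinarith
    unfold scadThreshold
    rw [if_neg (by linarith), if_neg (by linarith)]
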